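/- arXiv:2111.13616 — 4 statements merged into one kernel-verified Lean document; each statement's English description precedes it below -/
import Mathlib

section
/- Let Γ be a group acting by homeomorphisms on a compact Hausdorff space X and let U ⊆ X be an open subset whose Γ-translates cover X. If two Γ-invariant regular Borel probability measures on X agree on every Borel subset of U, then they are equal. -/
open Pointwise MeasureTheory

/-- If `X` is a compact Hausdorff `Γ`-space and `U ⊆ X` is an open set whose `Γ`-translates
cover `X`, then two `Γ`-invariant regular Borel probability measures on `X` agreeing on
every Borel subset of `U` are equal. -/
theorem invariant_measure_determined_on_cover
    {Γ X : Type*} [Group Γ] [TopologicalSpace X] [CompactSpace X] [T2Space X]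
    [MeasurableSpace X] [BorelSpace X] [MulAction Γ X] [ContinuousConstSMul Γ X]
    (U : Set X) (hU : IsOpen U) (hcov : (⋃ g : Γ, g • U) = Set.univ)
    (ν₁ ν₂ : Measure X)
    (hprob₁ : IsProbabilityMeasure ν₁) (hreg₁ : ν₁.Regular)
    (hinv₁ : ∀ (γ : Γ) (A : Set X), MeasurableSet A → ν₁ (γ • A) = ν₁ A)
    (hprob₂ : IsProbabilityMeasure ν₂) (hreg₂ : ν₂.Regular)
    (hinv₂ : ∀ (γ : Γ) (A : Set X), MeasurableSet A → ν₂ (γ • A) = ν₂ A)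
    (hagree : ∀ A : Set X, MeasurableSet A → A ⊆ U → ν₁ A = ν₂ A) :
    ν₁ = ν₂ := by
  classical
  have key : ∀ T : Finset Γ, ∀ A : Set X, MeasurableSet A → A ⊆ (⋃ g ∈ T, g • U) →
      ν₁ A = ν₂ A := by
    intro T
    induction T using Finset.induction_on with
    | empty =>
      intro A _ hA
      have : A = ∅ := by simpa using hA
      simp [this]
    | insert g T _ ih =>
      intro A hm hA
      have hg : MeasurableSet (g • U) := (hU.smul g).measurableSet
      rw [← measure_inter_add_sdiff A hg, ← measure_inter_add_sdiff (μ := ν₂) A hg]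
      congr 1
      · have hm' : MeasurableSet (g⁻¹ • (A ∩ g • U)) := by
          rw [← Set.preimage_smul]
          exact (continuous_const_smul g).measurable (hm.inter hg)
        rw [← hinv₁ g⁻¹ _ (hm.inter hg), ← hinv₂ g⁻¹ _ (hm.inter hg)]
        apply hagree _ hm'
        rw [Set.smul_set_subset_iff_subset_inv_smul_set, inv_inv]
        exact Set.inter_subset_right
      · apply ih _ (hm.diff hg)
        intro x hx
        have := hA hx.1
        rw [Finset.set_biUnion_insert] at this
        exact this.resolve_left hx.2
  obtain ⟨T, hT⟩ := isCompact_univ.elim_finite_subcover (fun g : Γ => g • U)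
    (fun g => hU.smul g) hcov.ge
  ext A hA
  exact key T A hA ((Set.subset_univ A).trans hT)
end

section
/- Let Γ be a group acting by homeomorphisms on a compact Hausdorff space X, let U ⊆ X be open, let g_1, …, g_n ∈ Γ satisfy X = g_1U ∪ … ∪ g_nU, and set A_i := U \ ⋃_{j<i} g_i⁻¹g_jU. For every μ ∈ P_Γ(U), the formula ν(A) := Σ_{i=1}^n μ(A_i ∩ g_i⁻¹A), for Borel sets A ⊆ X, defines a Γ-invariant regular Borel measure ν on X whose restriction to Borel subsets of U equals μ; in particular, the normalization ν/ν(X) is a Γ-invariant Borel probability measure on X. -/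
open Pointwise MeasureTheory
open scoped ENNReal

/-- `P_Γ(U)`: the set of regular Borel probability measures concentrated on `U` satisfying
`μ(A ∩ g⁻¹U) = μ(gA ∩ U)` for every `g ∈ Γ` and Borel `A ⊆ U`. -/
def PGamma (Γ : Type*) {X : Type*} [Group Γ] [MulAction Γ X] [TopologicalSpace X]
    [MeasurableSpace X] (U : Set X) : Set (Measure X) :=
  {μ | IsProbabilityMeasure μ ∧ μ.Regular ∧ μ Uᶜ = 0 ∧
    ∀ (g : Γ) (A : Set X), MeasurableSet A → A ⊆ U →
      μ (A ∩ g⁻¹ • U) = μ ((g • A) ∩ U)}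

/-- Finite partition additivity. -/
theorem measure_eq_sum_partition {X : Type*} [MeasurableSpace X] (μ : Measure X) {n : ℕ}
    (C : Fin n → Set X) (hm : ∀ i, MeasurableSet (C i))
    (hd : ∀ i j, i ≠ j → Disjoint (C i) (C j)) (hc : ∀ x, ∃ i, x ∈ C i)
    (S : Set X) (hS : MeasurableSet S) : μ S = ∑ i, μ (S ∩ C i) := by
  have h : S = ⋃ i, S ∩ C i := by
    ext x
    simp only [Set.mem_iUnion, Set.mem_inter_iff]
    exact ⟨fun hx => (hc x).imp fun i hi => ⟨hx, hi⟩, fun ⟨_, hx, _⟩ => hx⟩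
  conv_lhs => rw [h]
  rw [measure_iUnion _ (fun i => hS.inter (hm i)), tsum_fintype]
  intro i j hij
  exact (hd i j hij).mono Set.inter_subset_right Set.inter_subset_right

/-- Given a finite cover `X = g₁U ∪ … ∪ gₙU`, the sets `Aᵢ := U \ ⋃_{j<i} gᵢ⁻¹gⱼU`, and
`μ ∈ P_Γ(U)`, the formula `ν(A) := Σᵢ μ(Aᵢ ∩ gᵢ⁻¹A)` defines a `Γ`-invariant regular Borel
measure on `X` restricting to `μ` on Borel subsets of `U`; its normalization `ν/ν(X)` is a
`Γ`-invariant Borel probability measure on `X`. -/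
theorem extension_of_invariant_measure
    {Γ X : Type*} [Group Γ] [TopologicalSpace X] [CompactSpace X] [T2Space X]
    [MeasurableSpace X] [BorelSpace X] [MulAction Γ X] [ContinuousConstSMul Γ X]
    (U : Set X) (hU : IsOpen U) (n : ℕ) (g : Fin n → Γ)
    (hcov : (⋃ i, g i • U) = Set.univ)
    (A : Fin n → Set X)
    (hA : ∀ i, A i = U \ ⋃ j : Fin n, ⋃ _ : j < i, (g i)⁻¹ • (g j • U))
    (μ : Measure X) (hμ : μ ∈ PGamma Γ U) :
    ∃ ν : Measure X,
      (∀ S : Set X, MeasurableSet S → ν S = ∑ i, μ (A i ∩ (g i)⁻¹ • S)) ∧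
      ν.Regular ∧
      (∀ (γ : Γ) (S : Set X), MeasurableSet S → ν (γ • S) = ν S) ∧
      ν.restrict U = μ ∧
      IsProbabilityMeasure ((ν Set.univ)⁻¹ • ν) ∧
      (∀ (γ : Γ) (S : Set X), MeasurableSet S →
        ((ν Set.univ)⁻¹ • ν) (γ • S) = ((ν Set.univ)⁻¹ • ν) S) := by
  obtain ⟨hprob, hreg, hUc, hinv⟩ := hμ
  have hmU : MeasurableSet U := hU.measurableSet
  have hmA : ∀ i, MeasurableSet (A i) := by
    intro i
    rw [hA i]
    refine hmU.diff (MeasurableSet.iUnion fun j => MeasurableSet.iUnion fun _ => ?_)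
    exact (hmU.const_smul _).const_smul _
  have memA : ∀ i y, y ∈ A i ↔ y ∈ U ∧ ∀ j, j < i → (g j)⁻¹ • g i • y ∉ U := by
    intro i y
    rw [hA i]
    simp [Set.mem_smul_set_iff_inv_smul_mem]
  have hAU : ∀ i, A i ⊆ U := fun i y hy => ((memA i y).1 hy).1
  -- the partition
  have hC : ∀ i, MeasurableSet (g i • A i) := fun i => (hmA i).const_smul _
  have memC : ∀ i x, x ∈ g i • A i ↔ (g i)⁻¹ • x ∈ U ∧ ∀ j, j < i → (g j)⁻¹ • x ∉ U := by
    intro i x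
    rw [Set.mem_smul_set_iff_inv_smul_mem, memA]
    simp
  have hCd : ∀ i j, i ≠ j → Disjoint (g i • A i) (g j • A j) := by
    intro i j hij
    rw [Set.disjoint_left]
    intro x hx hy
    rw [memC] at hx hy
    rcases lt_or_gt_of_ne hij with h | h
    · exact hy.2 i h hx.1
    · exact hx.2 j h hy.1
  have hCc : ∀ x, ∃ i, x ∈ g i • A i := by
    intro x
    have hx : ∃ i, (g i)⁻¹ • x ∈ U := by
      have : x ∈ ⋃ i, g i • U := by rw [hcov]; trivial
      simpa [Set.mem_smul_set_iff_inv_smul_mem] using this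
    obtain ⟨i, hi, hmin⟩ := WellFounded.has_min (wellFounded_lt (α := Fin n))
      {i | (g i)⁻¹ • x ∈ U} hx
    exact ⟨i, (memC i x).2 ⟨hi, fun j hj hjU => hmin j hjU hj⟩⟩
  -- key invariance
  have key : ∀ (h : Γ) (E : Set X), MeasurableSet E → E ⊆ U → h • E ⊆ U → μ (h • E) = μ E := by
    intro h E hE hEU hhE
    have := hinv h E hE hEU
    rw [Set.inter_eq_left.2 hhE, Set.inter_eq_left.2] at this
    · exact this.symm
    · rwa [← Set.smul_set_subset_iff_subset_inv_smul_set]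
  let ν : Measure X := ∑ i, (μ.restrict (A i)).map (Homeomorph.smul (g i))
  have hνf : ∀ S : Set X, MeasurableSet S → ν S = ∑ i, μ (A i ∩ (g i)⁻¹ • S) := by
    intro S hS
    simp only [ν, Measure.finsetSum_apply]
    refine Finset.sum_congr rfl fun i _ => ?_
    rw [Measure.map_apply (Homeomorph.smul (g i)).continuous.measurable hS,
      Measure.restrict_apply ((Homeomorph.smul (g i)).continuous.measurable hS), Set.inter_comm]
    congr 2
    exact Set.preimage_smul (g i) S
  have hfin : IsFiniteMeasure ν := by
    refine ⟨?_⟩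
    rw [hνf _ MeasurableSet.univ]
    exact ENNReal.sum_lt_top.2 fun i _ => measure_lt_top _ _
  have hνreg : ν.Regular := by
    have : ∀ i, ((μ.restrict (A i)).map (Homeomorph.smul (g i))).InnerRegular :=
      fun i => Measure.InnerRegular.map _
    have : ν.InnerRegular := by
      simp only [ν]
      infer_instance
    infer_instance
  have hνinv : ∀ (γ : Γ) (S : Set X), MeasurableSet S → ν (γ • S) = ν S := by
    intro γ S hS
    rw [hνf _ (hS.const_smul γ), hνf _ hS]
    have h1 : ∀ i, μ (A i ∩ (g i)⁻¹ • γ • S)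
        = ∑ j, μ (A i ∩ (g i)⁻¹ • γ • S ∩ (g i)⁻¹ • γ • g j • A j) := by
      intro i
      refine measure_eq_sum_partition μ (fun j => (g i)⁻¹ • γ • g j • A j)
        (fun j => ((hC j).const_smul _).const_smul _) ?_ ?_ _
        ((hmA i).inter ((hS.const_smul _).const_smul _))
      · intro j k hjk
        simpa only [Set.disjoint_smul_set] using hCd j k hjk
      · intro x
        obtain ⟨j, hj⟩ := hCc (γ⁻¹ • g i • x)
        refine ⟨j, ?_⟩
        rw [Set.mem_smul_set_iff_inv_smul_mem, Set.mem_smul_set_iff_inv_smul_mem, inv_inv]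
        exact hj
    have h2 : ∀ j, μ (A j ∩ (g j)⁻¹ • S)
        = ∑ i, μ (A j ∩ (g j)⁻¹ • S ∩ (g j)⁻¹ • γ⁻¹ • g i • A i) := by
      intro j
      refine measure_eq_sum_partition μ (fun i => (g j)⁻¹ • γ⁻¹ • g i • A i)
        (fun i => ((hC i).const_smul _).const_smul _) ?_ ?_ _
        ((hmA j).inter (hS.const_smul _))
      · intro i k hjk
        simpa only [Set.disjoint_smul_set] using hCd i k hjk
      · intro x
        obtain ⟨i, hi⟩ := hCc (γ • g j • x)
        refine ⟨i, ?_⟩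
        rw [Set.mem_smul_set_iff_inv_smul_mem, Set.mem_smul_set_iff_inv_smul_mem, inv_inv, inv_inv]
        exact hi
    rw [Finset.sum_congr rfl fun i _ => h1 i, Finset.sum_congr rfl fun j _ => h2 j,
      Finset.sum_comm]
    refine Finset.sum_congr rfl fun j _ => Finset.sum_congr rfl fun i _ => ?_
    have heq : A j ∩ (g j)⁻¹ • S ∩ (g j)⁻¹ • γ⁻¹ • g i • A i
        = ((g j)⁻¹ * γ⁻¹ * g i) • (A i ∩ (g i)⁻¹ • γ • S ∩ (g i)⁻¹ • γ • g j • A j) := by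
      simp only [Set.smul_set_inter, smul_smul, mul_assoc, mul_inv_cancel_left,
        inv_mul_cancel_left, inv_mul_cancel, mul_one, one_smul]
      ext x
      simp only [Set.mem_inter_iff]
      tauto
    rw [heq, key]
    · exact ((hmA i).inter ((hS.const_smul _).const_smul _)).inter
        (((hC j).const_smul _).const_smul _)
    · exact fun x hx => hAU i hx.1.1
    · rw [← heq]
      exact fun x hx => hAU j hx.1.1
  have hνU : ν.restrict U = μ := by
    ext S hS
    rw [Measure.restrict_apply hS, hνf _ (hS.inter hmU)]
    have h0 : μ S = μ (S ∩ U) := by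
      refine (measure_inter_conull' ?_).symm
      exact measure_mono_null (fun x hx => hx.2) hUc
    rw [h0, measure_eq_sum_partition μ _ hC hCd hCc _ (hS.inter hmU)]
    refine Finset.sum_congr rfl fun i _ => ?_
    have heq : S ∩ U ∩ g i • A i = g i • (A i ∩ (g i)⁻¹ • (S ∩ U)) := by
      rw [Set.smul_set_inter, smul_inv_smul, Set.inter_comm]
    rw [heq, key]
    · exact (hmA i).inter ((hS.inter hmU).const_smul _)
    · exact fun x hx => hAU i hx.1
    · rw [← heq]
      exact fun x hx => hx.1.2
  have hne : NeZero ν := by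
    refine ⟨fun h0 => ?_⟩
    rw [h0, Measure.restrict_zero] at hνU
    exact IsProbabilityMeasure.ne_zero μ hνU.symm
  refine ⟨ν, hνf, hνreg, hνinv, hνU, inferInstance, ?_⟩
  intro γ S hS
  rw [Measure.smul_apply, Measure.smul_apply, hνinv γ S hS]
end

section
/- Let G be a group of homeomorphisms of a compact metrizable space X and let Λ ≤ G be a subgroup such that for every g ∈ G and every x ∈ X there exist a neighborhood U of x and h ∈ Λ with h|_U = g|_U. Then every Λ-invariant regular Borel probability measure on X is G-invariant; consequently the set of G-invariant regular Borel probability measures on X coincides with the set of Λ-invariant ones. -/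
open Pointwise MeasureTheory Filter Topology

/-- The group of self-homeomorphisms of `X`, with `(f * g) x = f (g x)`. -/
instance homeoGroup {X : Type*} [TopologicalSpace X] : Group (X ≃ₜ X) where
  mul f g := g.trans f
  one := Homeomorph.refl X
  inv := Homeomorph.symm
  mul_assoc _ _ _ := Homeomorph.ext fun _ => rfl
  one_mul _ := Homeomorph.ext fun _ => rfl
  mul_one _ := Homeomorph.ext fun _ => rfl
  inv_mul_cancel f := Homeomorph.ext fun x => f.symm_apply_apply x

/-- If `G` is a group of homeomorphisms of a compact metrizable space `X` and `Λ ≤ G` is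
such that every element of `G` locally coincides with an element of `Λ`, then every
`Λ`-invariant regular Borel probability measure is `G`-invariant; consequently the sets of
invariant measures coincide. -/
theorem covering_subgroup_invariant_measures
    {X : Type*} [TopologicalSpace X] [CompactSpace X] [TopologicalSpace.MetrizableSpace X]
    [MeasurableSpace X] [BorelSpace X]
    (G Λ : Subgroup (X ≃ₜ X)) (hle : Λ ≤ G)
    (hcov : ∀ g ∈ G, ∀ x : X, ∃ U ∈ nhds x, ∃ h ∈ Λ, ∀ y ∈ U, h y = g y) :
    (∀ ν : Measure X, IsProbabilityMeasure ν → ν.Regular →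
      (∀ h ∈ Λ, ∀ A : Set X, MeasurableSet A → ν (⇑h '' A) = ν A) →
      (∀ g ∈ G, ∀ A : Set X, MeasurableSet A → ν (⇑g '' A) = ν A)) ∧
    {ν : Measure X | IsProbabilityMeasure ν ∧ ν.Regular ∧
        ∀ h ∈ Λ, ∀ A : Set X, MeasurableSet A → ν (⇑h '' A) = ν A} =
      {ν : Measure X | IsProbabilityMeasure ν ∧ ν.Regular ∧
        ∀ g ∈ G, ∀ A : Set X, MeasurableSet A → ν (⇑g '' A) = ν A} := by
  have key : ∀ ν : Measure X, IsProbabilityMeasure ν → ν.Regular →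
      (∀ h ∈ Λ, ∀ A : Set X, MeasurableSet A → ν (⇑h '' A) = ν A) →
      (∀ g ∈ G, ∀ A : Set X, MeasurableSet A → ν (⇑g '' A) = ν A) := by
    intro ν _ _ hΛ g hg
    have hp : ∃ t : Set X, Set.univ ⊆ t ∧ MeasurableSet t ∧
        ∀ A : Set X, MeasurableSet A → A ⊆ t → ν (⇑g '' A) = ν A := by
      refine (isCompact_univ (X := X)).induction_on
        (p := fun s => ∃ t : Set X, s ⊆ t ∧ MeasurableSet t ∧
          ∀ A : Set X, MeasurableSet A → A ⊆ t → ν (⇑g '' A) = ν A) ?_ ?_ ?_ ?_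
      · refine ⟨∅, le_rfl, MeasurableSet.empty, fun A _ hA => ?_⟩
        rw [Set.subset_empty_iff.mp hA, Set.image_empty]
      · rintro s s' hs ⟨t, ht, h⟩
        exact ⟨t, hs.trans ht, h⟩
      · rintro s s' ⟨t, hst, ht, h⟩ ⟨t', hst', ht', h'⟩
        refine ⟨t ∪ t', Set.union_subset_union hst hst', ht.union ht', fun A hA hAt => ?_⟩
        have h1 := h (A ∩ t) (hA.inter ht) Set.inter_subset_right
        have h2 := h' (A \ t) (hA.diff ht) (by
          rintro x ⟨hx, hxt⟩
          exact (hAt hx).resolve_left hxt)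
        have hm : MeasurableSet (⇑g '' (A \ t)) :=
          g.measurableEmbedding.measurableSet_image.mpr (hA.diff ht)
        have hd : Disjoint (⇑g '' (A ∩ t)) (⇑g '' (A \ t)) :=
          (Set.disjoint_image_iff g.injective).mpr
            (Set.disjoint_left.mpr fun x hx hx' => hx'.2 hx.2)
        rw [← measure_inter_add_diff A ht, ← h1, ← h2, ← measure_union hd hm,
          ← Set.image_union, Set.inter_union_diff]
      · intro x _
        obtain ⟨U, hU, h, hh, hy⟩ := hcov g hg x
        refine ⟨interior U, mem_nhdsWithin_of_mem_nhds (interior_mem_nhds.mpr hU),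
          interior U, le_rfl, isOpen_interior.measurableSet, fun A hA hAU => ?_⟩
        rw [← hΛ h hh A hA]
        congr 1
        exact Set.image_congr fun y hyA => (hy y (interior_subset (hAU hyA))).symm
    obtain ⟨t, ht, _, h⟩ := hp
    exact fun A hA => h A hA ((Set.subset_univ A).trans ht)
  refine ⟨key, ?_⟩
  ext ν
  exact ⟨fun ⟨h1, h2, h3⟩ => ⟨h1, h2, key ν h1 h2 h3⟩,
    fun ⟨h1, h2, h3⟩ => ⟨h1, h2, fun h hh => h3 h (hle hh)⟩⟩
end

section
/- Let Γ be a countable group acting by homeomorphisms on a compact metrizable space X. Then the map Stab⁰ : X → Sub(Γ), sending x to the subgroup Γ_x^0 of elements of Γ that fix pointwise some neighborhood of x, is Borel measurable and Γ-equivariant (where Γ acts on Sub(Γ) by conjugation). Moreover, if ν is a Γ-invariant Borel probability measure on X with full support, then the pushforward measure ρ := (Stab⁰)_*ν is a conjugation-invariant Borel probability measure on Sub(Γ), and for every non-identity g ∈ Γ that fixes pointwise some nonempty open subset of X one has ρ({K ∈ Sub(Γ) : g ∈ K}) > 0; in particular, if such a g exists then ρ ≠ δ_{{e}}. -/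
open Pointwise MeasureTheory Filter Topology

/-- The subgroup `Γₓ⁰` of elements of `Γ` fixing pointwise some neighborhood of `x`. -/
def germStabilizer (Γ : Type*) {X : Type*} [Group Γ] [TopologicalSpace X] [MulAction Γ X]
    (x : X) : Subgroup Γ where
  carrier := {g | ∀ᶠ y in nhds x, g • y = y}
  one_mem' := Eventually.of_forall fun y => one_smul Γ y
  mul_mem' := by
    intro a b ha hb
    filter_upwards [ha, hb] with y h1 h2
    rw [mul_smul, h2, h1]
  inv_mem' := by
    intro a ha
    filter_upwards [ha] with y hy
    exact inv_smul_eq_iff.mpr hy.symm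

/-- The Chabauty topology on the space of subgroups of `G`, induced from the product
topology on `{0,1}^G` (each factor discrete) via characteristic functions. -/
instance chabautyTopology (G : Type*) [Group G] : TopologicalSpace (Subgroup G) :=
  TopologicalSpace.induced (fun K => (fun g => g ∈ K : G → Prop))
    (@Pi.topologicalSpace G (fun _ => Prop) (fun _ => ⊥))

/-- The Borel σ-algebra of the Chabauty topology. -/
instance chabautyMeasurableSpace (G : Type*) [Group G] : MeasurableSpace (Subgroup G) :=
  borel (Subgroup G)

instance chabautyBorelSpace (G : Type*) [Group G] : BorelSpace (Subgroup G) := ⟨rfl⟩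

/-- The conjugate subgroup `g Λ g⁻¹`. -/
def conjSubgroup {G : Type*} [Group G] (g : G) (Λ : Subgroup G) : Subgroup G :=
  Λ.map (MulAut.conj g).toMonoidHom

theorem measurable_subgroup_iff_aux {G Y : Type*} [Group G] [Countable G] [MeasurableSpace Y]
    (f : Y → Subgroup G) (h : ∀ g, MeasurableSet {y | g ∈ f y}) : Measurable f := by
  let _ : TopologicalSpace Prop := ⊥
  have : DiscreteTopology Prop := ⟨rfl⟩
  have : BorelSpace Prop := ⟨borel_eq_top_of_discrete.symm⟩
  have key : chabautyMeasurableSpace G =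
      MeasurableSpace.comap (fun K : Subgroup G => (fun g => g ∈ K : G → Prop))
        MeasurableSpace.pi := by
    rw [BorelSpace.measurable_eq (α := G → Prop)]
    exact borel_comap
  rw [key, measurable_comap_iff]
  refine measurable_pi_iff.mpr fun g => ?_
  exact measurableSet_setOfPred.mp (h g)

theorem measurableSet_mem_aux {G : Type*} [Group G] (g : G) :
    MeasurableSet {K : Subgroup G | g ∈ K} := by
  apply IsOpen.measurableSet
  let _ : TopologicalSpace Prop := ⊥
  have : DiscreteTopology Prop := ⟨rfl⟩
  have hc : Continuous (fun p : G → Prop => p g) := continuous_apply g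
  have h : IsOpen ((fun p : G → Prop => p g) ⁻¹' {p : Prop | p}) :=
    (isOpen_discrete {p : Prop | p}).preimage hc
  exact isOpen_induced h

theorem mem_conjSubgroup_aux {G : Type*} [Group G] (g h : G) (K : Subgroup G) :
    h ∈ conjSubgroup g K ↔ g⁻¹ * h * g ∈ K := by
  unfold conjSubgroup
  constructor
  · rintro ⟨k, hk, rfl⟩
    simpa [mul_assoc] using hk
  · intro hk
    exact ⟨_, hk, by simp [mul_assoc]⟩

/-- The map `Stab⁰ : x ↦ Γₓ⁰` is Borel measurable and `Γ`-equivariant (for the conjugation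
action on subgroups); for a fully supported invariant Borel probability measure `ν`, the
pushforward `ρ = (Stab⁰)_* ν` is a conjugation-invariant Borel probability measure on
`Sub(Γ)`, which gives positive mass to `{K : g ∈ K}` whenever `g ≠ 1` fixes a nonempty
open set pointwise; in particular `ρ ≠ δ_⊥` if such a `g` exists. -/
theorem germStabilizer_pushforward
    {Γ X : Type*} [Group Γ] [Countable Γ]
    [TopologicalSpace X] [CompactSpace X] [TopologicalSpace.MetrizableSpace X]
    [MeasurableSpace X] [BorelSpace X]
    [MulAction Γ X] [ContinuousConstSMul Γ X] :
    Measurable (fun x : X => germStabilizer Γ x) ∧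
    (∀ (g : Γ) (x : X), germStabilizer Γ (g • x) = conjSubgroup g (germStabilizer Γ x)) ∧
    (∀ g : Γ, Measurable (fun K : Subgroup Γ => conjSubgroup g K)) ∧
    (∀ ν : Measure X, IsProbabilityMeasure ν →
      (∀ (g : Γ) (A : Set X), MeasurableSet A → ν (g • A) = ν A) →
      (∀ V : Set X, IsOpen V → V.Nonempty → 0 < ν V) →
      IsProbabilityMeasure (ν.map (fun x => germStabilizer Γ x)) ∧
      (∀ g : Γ, (ν.map (fun x => germStabilizer Γ x)).map (fun K => conjSubgroup g K) =
        ν.map (fun x => germStabilizer Γ x)) ∧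
      (∀ g : Γ, g ≠ 1 → (∃ V : Set X, IsOpen V ∧ V.Nonempty ∧ ∀ y ∈ V, g • y = y) →
        0 < (ν.map (fun x => germStabilizer Γ x)) {K : Subgroup Γ | g ∈ K}) ∧
      ((∃ g : Γ, g ≠ 1 ∧ ∃ V : Set X, IsOpen V ∧ V.Nonempty ∧ ∀ y ∈ V, g • y = y) →
        ν.map (fun x => germStabilizer Γ x) ≠ Measure.dirac (⊥ : Subgroup Γ))) := by
  have hm : Measurable (fun x : X => germStabilizer Γ x) := by
    refine measurable_subgroup_iff_aux _ fun g => IsOpen.measurableSet ?_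
    exact isOpen_setOfPred_eventually_nhds
  have he : ∀ (g : Γ) (x : X),
      germStabilizer Γ (g • x) = conjSubgroup g (germStabilizer Γ x) := by
    intro g x
    ext h
    rw [mem_conjSubgroup_aux]
    change (∀ᶠ y in nhds (g • x), h • y = y) ↔ (∀ᶠ y in nhds x, (g⁻¹ * h * g) • y = y)
    have e : nhds (g • x) = Filter.map (fun y => g • y) (nhds x) :=
      ((Homeomorph.smul g).map_nhds_eq x).symm
    rw [e, Filter.eventually_map]
    refine Filter.eventually_congr (Eventually.of_forall fun y => ?_)
    rw [mul_smul, mul_smul, inv_smul_eq_iff]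
  have hc : ∀ g : Γ, Measurable (fun K : Subgroup Γ => conjSubgroup g K) := by
    intro g
    refine measurable_subgroup_iff_aux _ fun h => ?_
    simp only [mem_conjSubgroup_aux]
    exact measurableSet_mem_aux _
  refine ⟨hm, he, hc, fun ν hν hinv hfull => ?_⟩
  have hpos : ∀ g : Γ, g ≠ 1 → (∃ V : Set X, IsOpen V ∧ V.Nonempty ∧ ∀ y ∈ V, g • y = y) →
        0 < (ν.map (fun x => germStabilizer Γ x)) {K : Subgroup Γ | g ∈ K} := by
    rintro g - ⟨V, hV, hne, hfix⟩
    rw [Measure.map_apply hm (measurableSet_mem_aux g)]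
    refine (hfull V hV hne).trans_le (measure_mono fun x hx => ?_)
    exact Filter.mem_of_superset (hV.mem_nhds hx) hfix
  refine ⟨Measure.isProbabilityMeasure_map hm.aemeasurable, fun g => ?_, hpos, ?_⟩
  · have hg : Measurable (fun x : X => g • x) := (continuous_const_smul g).measurable
    have hνg : ν.map (fun x => g • x) = ν := by
      ext A hA
      rw [Measure.map_apply hg hA, Set.preimage_smul, hinv _ _ hA]
    rw [Measure.map_map (hc g) hm]
    have : (fun K : Subgroup Γ => conjSubgroup g K) ∘ (fun x : X => germStabilizer Γ x) =
        (fun x : X => germStabilizer Γ x) ∘ (fun x => g • x) := by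
      funext x
      exact (he g x).symm
    rw [this, ← Measure.map_map hm hg, hνg]
  · rintro ⟨g, hg, hV⟩ heq
    have := hpos g hg hV
    rw [heq, Measure.dirac_apply' _ (measurableSet_mem_aux g)] at this
    simp [hg] at this
end
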